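/- arXiv:2301.09042 — 2 statements merged into one kernel-verified Lean document; each statement's English description precedes it below -/
import Mathlib

section
/- Let X be a topological space with a topological basis B, let μ be a measure on X, let Y be a finite type, and let f : X → Y be a classifier. Then f is explainable (i.e., there exists a set E ⊆ X that is meagre and μ-null such that every x ∉ E has an explanation: a basic open set A ∈ B with x ∈ A and A ⊆ f⁻¹({f x})) if and only if for every y ∈ Y there exist a set O_y that is open in X and a set E_y that is meagre and μ-null such that f⁻¹({y}) = O_y ∪ E_y. -/
open MeasureTheory

/-- **Characterization of explainability.** A classifier `f : X → Y` is explainable for a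
scheme given by a topological basis `B` and a measure `μ` (i.e., there is a meagre, `μ`-null
set of edge cases `E` such that every point outside `E` has a basic open explanation
contained in its fiber) if and only if every fiber `f ⁻¹' {y}` is the union of an open set
and a meagre, `μ`-null set. -/
theorem explainable_iff_fibers_decompose {X Y : Type*} [TopologicalSpace X]
    [MeasurableSpace X] [Finite Y] (B : Set (Set X))
    (hB : TopologicalSpace.IsTopologicalBasis B) (μ : Measure X) (f : X → Y) :
    (∃ E : Set X, IsMeagre E ∧ μ E = 0 ∧
        ∀ x ∉ E, ∃ A ∈ B, x ∈ A ∧ A ⊆ f ⁻¹' {f x}) ↔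
      (∀ y : Y, ∃ O E : Set X, IsOpen O ∧ IsMeagre E ∧ μ E = 0 ∧
        f ⁻¹' {y} = O ∪ E) := by
  constructor
  · rintro ⟨E, hE, hμ, h⟩ y
    refine ⟨interior (f ⁻¹' {y}), f ⁻¹' {y} ∩ E, isOpen_interior,
      hE.mono Set.inter_subset_right, measure_mono_null Set.inter_subset_right hμ, ?_⟩
    refine subset_antisymm (fun x hx => ?_)
      (Set.union_subset interior_subset Set.inter_subset_left)
    by_cases hxE : x ∈ E
    · exact Or.inr ⟨hx, hxE⟩
    · obtain ⟨A, hA, hxA, hAf⟩ := h x hxE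
      obtain rfl : f x = y := hx
      exact Or.inl (mem_interior.2 ⟨A, hAf, hB.isOpen hA, hxA⟩)
  · intro h
    choose O E hO hE hμ hf using h
    refine ⟨⋃ y, E y, isMeagre_iUnion hE, measure_iUnion_null hμ, fun x hx => ?_⟩
    have hxO : x ∈ O (f x) := by
      have hxf : x ∈ O (f x) ∪ E (f x) := hf (f x) ▸ rfl
      exact hxf.resolve_right fun hxE => hx (Set.mem_iUnion_of_mem _ hxE)
    obtain ⟨A, hA, hxA, hAO⟩ := hB.exists_subset_of_mem_open hxO (hO (f x))
    exact ⟨A, hA, hxA, hAO.trans (hf (f x) ▸ Set.subset_union_left)⟩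
end

section
/- Let X be a topological space, let μ be a measure on X, let Y be a finite type, and let f₁, …, f_k : X → Y be classifiers such that for each i and each y ∈ Y there exist an open set O and a meagre, μ-null set E with f_i⁻¹({y}) = O ∪ E. Let g : Y^k → Y be any aggregation function (in particular, the majority-vote function defining a voting ensemble), and define the ensemble classifier f : X → Y by f(x) = g(f₁(x), …, f_k(x)). Then for each y ∈ Y there exist an open set O_y and a meagre, μ-null set E_y with f⁻¹({y}) = O_y ∪ E_y; hence, if the decomposition property is equivalent to explainability relative to a basis B of X, the ensemble f is explainable whenever each f_i is. -/
open MeasureTheory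

/-- **Voting ensembles preserve explainability.** If each classifier `f i : X → Y` has
decomposable fibers (each fiber is the union of an open set and a meagre, `μ`-null set),
then for any aggregation function `g : (Fin k → Y) → Y` (e.g. majority vote), the ensemble
classifier `x ↦ g (fun i => f i x)` also has decomposable fibers. -/
theorem ensemble_preserves_explainability {X Y : Type*} [TopologicalSpace X]
    [MeasurableSpace X] [Finite Y] (μ : Measure X) (k : ℕ) (f : Fin k → X → Y)
    (hf : ∀ i : Fin k, ∀ y : Y, ∃ O E : Set X, IsOpen O ∧ IsMeagre E ∧ μ E = 0 ∧
      (f i) ⁻¹' {y} = O ∪ E)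
    (g : (Fin k → Y) → Y) :
    ∀ y : Y, ∃ O E : Set X, IsOpen O ∧ IsMeagre E ∧ μ E = 0 ∧
      (fun x => g (fun i => f i x)) ⁻¹' {y} = O ∪ E := by
  choose O E hO hE hμ hfib using hf
  have hOf : ∀ i y x, x ∈ O i y → f i x = y := fun i y x hx => by
    have : x ∈ f i ⁻¹' {y} := hfib i y ▸ Or.inl hx
    exact this
  intro y
  refine ⟨⋃ v : {v // g v = y}, ⋂ i, O i (v.1 i),
    (fun x => g (fun i => f i x)) ⁻¹' {y} ∩ ⋃ i, ⋃ z, E i z, ?_, ?_, ?_, ?_⟩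
  · exact isOpen_iUnion fun v => isOpen_iInter_of_finite fun i => hO i (v.1 i)
  · exact (isMeagre_iUnion fun i => isMeagre_iUnion fun z => hE i z).mono Set.inter_subset_right
  · exact measure_mono_null Set.inter_subset_right
      (measure_iUnion_null fun i => measure_iUnion_null fun z => hμ i z)
  · ext x
    constructor
    · intro hx
      by_cases hN : x ∈ ⋃ i, ⋃ z, E i z
      · exact Or.inr ⟨hx, hN⟩
      · refine Or.inl (Set.mem_iUnion.2 ⟨⟨fun i => f i x, hx⟩, Set.mem_iInter.2 fun i => ?_⟩)
        have hxi : x ∈ O i (f i x) ∪ E i (f i x) := hfib i (f i x) ▸ rfl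
        exact hxi.resolve_right fun h => hN (Set.mem_iUnion₂.2 ⟨i, f i x, h⟩)
    · rintro (hx | hx)
      · obtain ⟨⟨v, hv⟩, hx⟩ := Set.mem_iUnion.1 hx
        have hfv : (fun i => f i x) = v := funext fun i => hOf i _ x (Set.mem_iInter.1 hx i)
        simpa [hfv] using hv
      · exact hx.1
end
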